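/- Let d ≥ 1, let L ≥ 2 be an integer, let β > 1, and let m ∈ (−1,1). Suppose σ* : T_L → [−1,1] is measurable with L^{−d}∫_{T_L} σ*(r) dr = m and F(σ*) = inf{ F(σ) : σ : T_L → [−1,1] measurable, L^{−d}∫_{T_L} σ(r) dr = m }. Then −1 < σ*(x) < 1 for almost every x, and there exists λ ∈ ℝ such that σ*(x) = tanh( β( ∫_{T_L} J(|x−y|) σ*(y) dy + λ ) ) for almost every x ∈ T_L; in particular σ* has a continuously differentiable version whose gradient is bounded by a constant depending only on d, β and J. -/

import Mathlib

open MeasureTheory Real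

/-- The `d`-dimensional torus `(ℝ/Lℤ)^d` with its Lebesgue (Haar) measure. -/
abbrev Torus (d L : ℕ) := Fin d → AddCircle (L : ℝ)

/-- Geodesic (Euclidean) distance on the torus. -/
noncomputable def torusDist {d L : ℕ} (x y : Torus d L) : ℝ :=
  Real.sqrt (∑ i, (dist (x i) (y i)) ^ 2)

/-- The entropy function `i`. (`Real.log 0 = 0` gives the convention `0 · log 0 = 0`.) -/
noncomputable def ient (m : ℝ) : ℝ :=
  (1 - m) / 2 * Real.log ((1 - m) / 2) + (1 + m) / 2 * Real.log ((1 + m) / 2)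

/-- The hypotheses on the Kac interaction potential `J : [0,∞) → ℝ`: nonnegative, bounded,
continuous, supported in `[0,1]`, smooth and strictly decreasing on `[0,1]`, and normalized
so that `∫_{ℝ^d} J(|r|) dr = 1`. -/
structure KacPotential (d : ℕ) (J : ℝ → ℝ) : Prop where
  nonneg : ∀ r, 0 ≤ J r
  bounded : ∃ M, ∀ r, |J r| ≤ M
  continuous : Continuous J
  support : ∀ r, 1 < r → J r = 0
  strictAnti : StrictAntiOn J (Set.Icc 0 1)
  smooth : ContDiffOn ℝ (⊤ : ℕ∞) J (Set.Icc 0 1)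
  normalized : (∫ r : EuclideanSpace ℝ (Fin d), J ‖r‖) = 1

/-- The Gates–Penrose–Lebowitz free energy functional
`F(σ) = (1/β)∫ i(σ(x)) dx − (1/2)∫∫ J(|x−y|) σ(x) σ(y) dx dy`. -/
noncomputable def GPL (d L : ℕ) [Fact ((0:ℝ) < L)] (β : ℝ) (J : ℝ → ℝ)
    (σ : Torus d L → ℝ) : ℝ :=
  (1 / β) * (∫ x, ient (σ x))
    - (1 / 2) * ∫ x, ∫ y, J (torusDist x y) * σ x * σ y

/-- The lift of a function on the torus to a (periodic) function on `ℝ^d`. -/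
noncomputable def liftTorus {d L : ℕ} (φ : Torus d L → ℝ) : EuclideanSpace ℝ (Fin d) → ℝ :=
  fun v => φ (fun i => ((v i : ℝ) : AddCircle (L:ℝ)))

/-!
Perturbing a minimizer `σ` towards a competitor `τ` of the same mean and using convexity of the
entropy shows that `σ` minimizes the linearized functional `τ ↦ ∫ (i(τ) - β (J ∗ σ) τ)` under the
mean constraint. A multiplier term `-c ∫ τ` changes this by a constant; pointwise, the strictly
convex function `s ↦ i(s) - a s` is uniquely minimized on `[-1, 1]` at `s = tanh a`, and by the
intermediate value theorem `c` can be chosen so that `tanh (β (J ∗ σ) + c)` has the prescribed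
mean. Hence `σ` equals this profile almost everywhere.

For the regularity, `w ↦ J |w|` is Lipschitz with compact support, so `∇(J ∗ σ) = (∇J) ∗ σ` by
Rademacher's theorem, with `∇J` integrable. This gradient is bounded by `‖∇J‖₁`, and it is
continuous because translations act continuously on `L¹`.
-/

open Filter Set
open scoped Convolution NNReal Pointwise Topology

section Tanh

theorem hasDerivAt_tanh (x : ℝ) : HasDerivAt tanh (1 / cosh x ^ 2) x := by
  rw [show tanh = sinh / cosh from funext tanh_eq_sinh_div_cosh, ← cosh_sq_sub_sinh_sq x]
  simpa only [sq] using (hasDerivAt_sinh x).div (hasDerivAt_cosh x) (cosh_pos x).ne'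

theorem contDiff_tanh {n : WithTop ℕ∞} : ContDiff ℝ n tanh := by
  rw [show tanh = sinh / cosh from funext tanh_eq_sinh_div_cosh]
  exact contDiff_sinh.div contDiff_cosh fun x => (cosh_pos x).ne'

theorem tanh_mem_Ioo (x : ℝ) : tanh x ∈ Ioo (-1) 1 :=
  ⟨neg_one_lt_tanh x, tanh_lt_one x⟩

theorem monotone_tanh : Monotone tanh :=
  monotone_of_hasDerivAt_nonneg hasDerivAt_tanh fun x => by positivity

theorem norm_fderiv_tanh_comp_le {E : Type*} [NormedAddCommGroup E] [NormedSpace ℝ E] {f : E → ℝ}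
    {x : E} (hf : DifferentiableAt ℝ f x) :
    ‖fderiv ℝ (tanh ∘ f) x‖ ≤ ‖fderiv ℝ f x‖ := by
  rw [((hasDerivAt_tanh (f x)).comp_hasFDerivAt x hf.hasFDerivAt).fderiv, norm_smul]
  refine mul_le_of_le_one_left (norm_nonneg _) ?_
  rw [norm_of_nonneg (by positivity)]
  exact div_le_one_of_le₀ (one_le_pow₀ (one_le_cosh _)) (by positivity)

theorem norm_fderiv_tanh_mul_add_le {E : Type*} [NormedAddCommGroup E] [NormedSpace ℝ E]
    {f : E → ℝ} {x : E} (hf : DifferentiableAt ℝ f x) (β c : ℝ) :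
    ‖fderiv ℝ (fun y => tanh (β * (f y + c))) x‖ ≤ |β| * ‖fderiv ℝ f x‖ := by
  refine (norm_fderiv_tanh_comp_le (f := fun y => β * (f y + c)) (by fun_prop)).trans_eq ?_
  rw [fderiv_const_mul (by fun_prop), fderiv_add_const, norm_smul, norm_eq_abs]

end Tanh

section Entropy

theorem ient_eq_neg_binEntropy (s : ℝ) : ient s = -binEntropy ((1 + s) / 2) := by
  rw [ient, binEntropy, show 1 - (1 + s) / 2 = (1 - s) / 2 by ring, log_inv, log_inv]
  ring

theorem continuous_ient : Continuous ient := by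
  rw [funext ient_eq_neg_binEntropy]
  fun_prop

theorem hasDerivAt_ient {s : ℝ} (hs : s ∈ Ioo (-1) 1) : HasDerivAt ient (artanh s) s := by
  have hp : 0 < 1 + s := by linarith [hs.1]
  have hq : 0 < 1 - s := by linarith [hs.2]
  have inner : HasDerivAt (fun s : ℝ => (1 + s) / 2) (1 / 2) s :=
    ((hasDerivAt_id s).const_add 1).div_const 2
  rw [funext ient_eq_neg_binEntropy]
  refine ((hasDerivAt_binEntropy (p := (1 + s) / 2) (by linarith) (by linarith)).comp s
    inner).neg.congr_deriv ?_
  rw [artanh_eq_half_log (Ioo_subset_Icc_self hs), log_div hp.ne' hq.ne',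
    show 1 - (1 + s) / 2 = (1 - s) / 2 by ring, log_div hq.ne' two_ne_zero,
    log_div hp.ne' two_ne_zero]
  ring

theorem strictConvexOn_ient : StrictConvexOn ℝ (Icc (-1) 1) ient := by
  refine ⟨convex_Icc _ _, fun s hs t ht hst a b ha hb hab => ?_⟩
  have half_mem {s : ℝ} (hs : s ∈ Icc (-1) 1) : (1 + s) / 2 ∈ Icc (0 : ℝ) 1 :=
    ⟨by linarith [hs.1], by linarith [hs.2]⟩
  have h := strictConcave_binEntropy.2 (half_mem hs) (half_mem ht)
    (fun h => hst (by linarith)) ha hb hab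
  have half_combo : a • ((1 + s) / 2) + b • ((1 + t) / 2) = (1 + (a • s + b • t)) / 2 := by
    simp only [smul_eq_mul]
    linear_combination hab / 2
  rw [half_combo] at h
  simp only [ient_eq_neg_binEntropy, smul_eq_mul] at h ⊢
  linarith

theorem ient_tanh_sub_lt {a s : ℝ} (hs : s ∈ Icc (-1) 1) (hsa : s ≠ tanh a) :
    ient (tanh a) - a * tanh a < ient s - a * s := by
  have ha := tanh_mem_Ioo a
  have ha' := Ioo_subset_Icc_self ha
  have deriv_eq : HasDerivAt ient a (tanh a) := by simpa [artanh_tanh] using hasDerivAt_ient ha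
  rcases hsa.lt_or_gt with h | h
  · have slope_lt := strictConvexOn_ient.slope_lt_of_hasDerivAt hs ha' h deriv_eq
    rw [slope_def_field, div_lt_iff₀ (sub_pos.2 h)] at slope_lt
    linarith
  · have lt_slope := strictConvexOn_ient.lt_slope_of_hasDerivAt ha' hs h deriv_eq
    rw [slope_def_field, lt_div_iff₀ (sub_pos.2 h)] at lt_slope
    linarith

end Entropy

section ConvexMinimization

theorem sub_add_deriv_nonneg_of_isMinOn_add {V : Type*} [AddCommGroup V] [Module ℝ V] {S : Set V}
    {φ g : V → ℝ} {x y : V} {g' : ℝ} (hφ : ConvexOn ℝ S φ) (hx : x ∈ S) (hy : y ∈ S)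
    (hg : HasDerivAt (fun t : ℝ => g (AffineMap.lineMap x y t)) g' 0)
    (hmin : IsMinOn (φ + g) S x) : 0 ≤ φ y - φ x + g' := by
  have slope_tendsto := hg.tendsto_slope_zero_right
  simp only [zero_add, AffineMap.lineMap_apply_zero, smul_eq_mul] at slope_tendsto
  refine ge_of_tendsto (tendsto_const_nhds.add slope_tendsto) ?_
  filter_upwards [Ioo_mem_nhdsGT one_pos] with t ht
  have mem_S : AffineMap.lineMap x y t ∈ S := hφ.1.lineMap_mem hx hy (Ioo_subset_Icc_self ht)
  have φ_le : φ (AffineMap.lineMap x y t) ≤ (1 - t) * φ x + t * φ y := by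
    rw [AffineMap.lineMap_apply_module]
    exact hφ.2 hx hy (sub_nonneg.2 ht.2.le) ht.1.le (sub_add_cancel _ _)
  have le_lineMap : φ x + g x ≤ φ (AffineMap.lineMap x y t) + g (AffineMap.lineMap x y t) :=
    hmin mem_S
  rw [← mul_nonneg_iff_of_pos_left ht.1, mul_add, mul_inv_cancel_left₀ ht.1.ne']
  linarith

end ConvexMinimization

section FiniteMeasure

variable {X : Type*} [MeasurableSpace X] {μ : Measure X} [IsFiniteMeasure μ]

theorem integrable_comp_of_mem_Icc {φ : ℝ → ℝ} {f : X → ℝ} {a b : ℝ} (hφ : Continuous φ)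
    (hf : Measurable f) (hfI : ∀ x, f x ∈ Icc a b) : Integrable (fun x => φ (f x)) μ := by
  obtain ⟨C, hC⟩ := isCompact_Icc.exists_bound_of_continuousOn (hφ.continuousOn (s := Icc a b))
  exact .of_bound (hφ.measurable.comp hf).aestronglyMeasurable C
    (.of_forall fun x => hC _ (hfI x))

theorem exists_integral_comp_add_eq {φ : ℝ → ℝ} {h : X → ℝ} {B C : ℝ} (hφ : Continuous φ)
    (hφ_mono : Monotone φ) (hφC : ∀ t, |φ t| ≤ C) (hh : Measurable h) (hhB : ∀ x, |h x| ≤ B)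
    (a : ℝ) : ∃ c, ∫ x, φ (h x + c) ∂μ = φ a * μ.real univ := by
  have integrable (c : ℝ) : Integrable (fun x => φ (h x + c)) μ :=
    .of_bound (hφ.measurable.comp (hh.add_const c)).aestronglyMeasurable C
      (.of_forall fun x => hφC _)
  have integral_continuous : Continuous fun c => ∫ x, φ (h x + c) ∂μ :=
    continuous_of_dominated (fun c => (integrable c).aestronglyMeasurable)
      (fun c => .of_forall fun x => hφC _) (integrable_const C) (.of_forall fun x => by fun_prop)
  have integral_const_eq : φ a * μ.real univ = ∫ _, φ a ∂μ := by
    rw [integral_const, smul_eq_mul, mul_comm]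
  rw [integral_const_eq]
  refine mem_range_of_exists_le_of_exists_ge integral_continuous ⟨a - B, ?_⟩ ⟨a + B, ?_⟩
  · exact integral_mono (integrable _) (integrable_const _) fun x =>
      hφ_mono (by linarith [le_of_abs_le (hhB x)])
  · exact integral_mono (integrable_const _) (integrable _) fun x =>
      hφ_mono (by linarith [neg_le_of_abs_le (hhB x)])

end FiniteMeasure

section Gibbs

variable {X : Type*} [MeasurableSpace X] {μ : Measure X} [IsFiniteMeasure μ] {a σ : X → ℝ}

theorem integrable_ient_sub_mul (ha : Integrable a μ) (hσ : Measurable σ)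
    (hσI : ∀ x, σ x ∈ Icc (-1) 1) : Integrable (fun x => ient (σ x) - a x * σ x) μ :=
  (integrable_comp_of_mem_Icc continuous_ient hσ hσI).sub <|
    ha.mul_bdd (c := 1) hσ.aestronglyMeasurable (.of_forall fun x => abs_le.2 (hσI x))

theorem ae_eq_tanh_of_integral_le (ha : Measurable a) (ha_int : Integrable a μ)
    (hσ : Measurable σ) (hσI : ∀ x, σ x ∈ Icc (-1) 1)
    (hle : ∫ x, (ient (σ x) - a x * σ x) ∂μ ≤ ∫ x, (ient (tanh (a x)) - a x * tanh (a x)) ∂μ) :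
    σ =ᵐ[μ] fun x => tanh (a x) := by
  have hτ : Measurable fun x => tanh (a x) := (contDiff_tanh (n := 0)).continuous.measurable.comp ha
  have gap_nonneg (x : X) :
      0 ≤ ient (σ x) - a x * σ x - (ient (tanh (a x)) - a x * tanh (a x)) := by
    by_cases hx : σ x = tanh (a x)
    · rw [hx, sub_self]
    · exact (sub_pos.2 (ient_tanh_sub_lt (hσI x) hx)).le
  have integrable_σ := integrable_ient_sub_mul ha_int hσ hσI
  have integrable_τ :=
    integrable_ient_sub_mul ha_int hτ fun x => Ioo_subset_Icc_self (tanh_mem_Ioo (a x))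
  have gap_integral_eq_zero := (integral_nonneg gap_nonneg).antisymm' <| by
    rw [integral_sub integrable_σ integrable_τ]
    exact sub_nonpos.2 hle
  filter_upwards [(integral_eq_zero_iff_of_nonneg gap_nonneg
    (integrable_σ.sub integrable_τ)).1 gap_integral_eq_zero] with x hx
  by_contra hne
  exact (sub_pos.2 (ient_tanh_sub_lt (hσI x) hne)).ne' hx

end Gibbs

section MeanField

variable {X : Type*} [MeasurableSpace X]

/-- The field `x ↦ ∫ k(x, y) σ(y) dμ(y)` created by the profile `σ` through the kernel `k`. -/
noncomputable def meanField (μ : Measure X) (k : X → X → ℝ) (σ : X → ℝ) (x : X) : ℝ :=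
  ∫ y, k x y * σ y ∂μ

/-- A measurable kernel whose values are bounded by `B` in absolute value. -/
structure IsBoundedKernel (k : X → X → ℝ) (B : ℝ) : Prop where
  measurable : Measurable (Function.uncurry k)
  abs_le : ∀ x y, |k x y| ≤ B

/-- The bilinear interaction energy `∫∫ k(x, y) σ(x) τ(y) dμ(y) dμ(x)`. -/
noncomputable def interaction (μ : Measure X) (k : X → X → ℝ) (σ τ : X → ℝ) : ℝ :=
  ∫ x, ∫ y, k x y * σ x * τ y ∂μ ∂μ

/-- The free energy of a spin profile on a measure space with pair interaction `k`; it is the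
Gates–Penrose–Lebowitz functional when `k x y = J (torusDist x y)`. -/
noncomputable def freeEnergy (μ : Measure X) (k : X → X → ℝ) (β : ℝ) (σ : X → ℝ) : ℝ :=
  (1 / β) * (∫ x, ient (σ x) ∂μ) - (1 / 2) * interaction μ k σ σ

/-- The measurable profiles with values in `[-1, 1]` and total magnetization `M`. -/
def spinProfiles (μ : Measure X) (M : ℝ) : Set (X → ℝ) :=
  {σ | Measurable σ ∧ (∀ x, σ x ∈ Icc (-1) 1) ∧ ∫ x, σ x ∂μ = M}

variable {μ : Measure X} {k : X → X → ℝ} {σ τ : X → ℝ} {B M β m : ℝ}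

theorem interaction_eq_integral_mul_meanField (σ τ : X → ℝ) :
    interaction μ k σ τ = ∫ x, σ x * meanField μ k τ x ∂μ := by
  simp only [interaction, meanField, ← integral_const_mul, mul_left_comm, mul_assoc]

namespace IsBoundedKernel

theorem abs_meanField_le (hk : IsBoundedKernel k B) (hσ : Integrable σ μ) (x : X) :
    |meanField μ k σ x| ≤ B * ∫ y, |σ y| ∂μ := by
  rw [← integral_const_mul, ← norm_eq_abs]
  refine norm_integral_le_of_norm_le (hσ.abs.const_mul B) (.of_forall fun y => ?_)
  rw [norm_mul]
  exact mul_le_mul_of_nonneg_right (hk.abs_le x y) (abs_nonneg _)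

theorem measurable_meanField [SFinite μ] (hk : IsBoundedKernel k B) (hσ : Measurable σ) :
    Measurable (meanField μ k σ) := by
  have integrand_measurable : Measurable fun p : X × X => k p.1 p.2 * σ p.2 :=
    hk.measurable.mul (hσ.comp measurable_snd)
  exact integrand_measurable.stronglyMeasurable.integral_prod_right'.measurable

theorem integrable_prod (hk : IsBoundedKernel k B) (hσ : Integrable σ μ) (hτ : Integrable τ μ) :
    Integrable (fun p : X × X => k p.1 p.2 * σ p.1 * τ p.2) (μ.prod μ) := by
  simp only [mul_assoc]
  exact (hσ.mul_prod hτ).bdd_mul hk.measurable.aestronglyMeasurable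
    (.of_forall fun p => hk.abs_le p.1 p.2)

variable [SFinite μ]

theorem integrable_mul_meanField (hk : IsBoundedKernel k B) (hσ : Integrable σ μ)
    (hτ : Integrable τ μ) : Integrable (fun x => σ x * meanField μ k τ x) μ := by
  simpa only [meanField, ← integral_const_mul, mul_left_comm, mul_assoc] using
    (hk.integrable_prod hσ hτ).integral_prod_left

theorem interaction_sub_left (hk : IsBoundedKernel k B) {ρ : X → ℝ} (hσ : Integrable σ μ)
    (hτ : Integrable τ μ) (hρ : Integrable ρ μ) :
    interaction μ k (σ - τ) ρ = interaction μ k σ ρ - interaction μ k τ ρ := by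
  simp only [interaction_eq_integral_mul_meanField, Pi.sub_apply, sub_mul]
  exact integral_sub (hk.integrable_mul_meanField hσ hρ) (hk.integrable_mul_meanField hτ hρ)

theorem interaction_comm (hk : IsBoundedKernel k B) (hk_symm : ∀ x y, k x y = k y x)
    (hσ : Integrable σ μ) (hτ : Integrable τ μ) :
    interaction μ k σ τ = interaction μ k τ σ := by
  rw [interaction, integral_integral_swap (hk.integrable_prod hσ hτ), interaction]
  simp only [fun x y => hk_symm x y, mul_right_comm]

theorem interaction_add_smul_self (hk : IsBoundedKernel k B) (hk_symm : ∀ x y, k x y = k y x)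
    (hσ : Integrable σ μ) (hτ : Integrable τ μ) (t : ℝ) :
    interaction μ k (σ + t • τ) (σ + t • τ) =
      interaction μ k σ σ + 2 * t * interaction μ k τ σ + t ^ 2 * interaction μ k τ τ := by
  set pairEnergy : (X → ℝ) → (X → ℝ) → X × X → ℝ := fun ρ ρ' p => k p.1 p.2 * ρ p.1 * ρ' p.2
  have interaction_eq {ρ ρ' : X → ℝ} (hρ : Integrable ρ μ) (hρ' : Integrable ρ' μ) :
      interaction μ k ρ ρ' = ∫ p, pairEnergy ρ ρ' p ∂μ.prod μ :=
    integral_integral (hk.integrable_prod hρ hρ')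
  have expansion : pairEnergy (σ + t • τ) (σ + t • τ) = pairEnergy σ σ + t • pairEnergy σ τ
      + t • pairEnergy τ σ + t ^ 2 • pairEnergy τ τ := by
    ext p
    simp only [pairEnergy, Pi.add_apply, Pi.smul_apply, smul_eq_mul]
    ring
  have hσσ : Integrable (pairEnergy σ σ) (μ.prod μ) := hk.integrable_prod hσ hσ
  have hστ : Integrable (t • pairEnergy σ τ) (μ.prod μ) := (hk.integrable_prod hσ hτ).smul t
  have hτσ : Integrable (t • pairEnergy τ σ) (μ.prod μ) := (hk.integrable_prod hτ hσ).smul t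
  have hττ : Integrable (t ^ 2 • pairEnergy τ τ) (μ.prod μ) :=
    (hk.integrable_prod hτ hτ).smul (t ^ 2)
  rw [interaction_eq (hσ.add (hτ.smul t)) (hσ.add (hτ.smul t)), expansion,
    integral_add' ((hσσ.add hστ).add hτσ) hττ, integral_add' (hσσ.add hστ) hτσ,
    integral_add' hσσ hστ]
  simp only [Pi.smul_apply, smul_eq_mul, integral_const_mul]
  rw [← interaction_eq hσ hσ, ← interaction_eq hσ hτ, ← interaction_eq hτ hσ,
    ← interaction_eq hτ hτ, hk.interaction_comm hk_symm hσ hτ]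
  ring

theorem hasDerivAt_interaction_lineMap (hk : IsBoundedKernel k B)
    (hk_symm : ∀ x y, k x y = k y x) (hσ : Integrable σ μ) (hτ : Integrable τ μ) :
    HasDerivAt
      (fun t : ℝ => interaction μ k (AffineMap.lineMap σ τ t) (AffineMap.lineMap σ τ t))
      (2 * interaction μ k (τ - σ) σ) 0 := by
  have expansion (t : ℝ) :
      interaction μ k (AffineMap.lineMap σ τ t) (AffineMap.lineMap σ τ t) =
        interaction μ k σ σ + 2 * t * interaction μ k (τ - σ) σ
          + t ^ 2 * interaction μ k (τ - σ) (τ - σ) := by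
    rw [AffineMap.lineMap_apply_module', add_comm,
      hk.interaction_add_smul_self hk_symm hσ (hτ.sub hσ)]
  rw [funext expansion]
  have linear_part := ((hasDerivAt_id (0 : ℝ)).const_mul 2).mul_const (interaction μ k (τ - σ) σ)
  have quadratic_part :=
    ((hasDerivAt_id (0 : ℝ)).pow 2).mul_const (interaction μ k (τ - σ) (τ - σ))
  simpa using (linear_part.const_add (interaction μ k σ σ)).fun_add quadratic_part

end IsBoundedKernel

variable [IsFiniteMeasure μ]

theorem integrable_of_mem_spinProfiles (hσ : σ ∈ spinProfiles μ M) : Integrable σ μ :=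
  integrable_comp_of_mem_Icc continuous_id hσ.1 hσ.2.1

theorem convex_spinProfiles (μ : Measure X) [IsFiniteMeasure μ] (M : ℝ) :
    Convex ℝ (spinProfiles μ M) := by
  refine fun σ hσ τ hτ a b ha hb hab =>
    ⟨(hσ.1.const_smul a).add (hτ.1.const_smul b),
      fun x => convex_Icc (-1) 1 (hσ.2.1 x) (hτ.2.1 x) ha hb hab, ?_⟩
  simp only [Pi.add_apply, Pi.smul_apply, smul_eq_mul]
  rw [integral_add ((integrable_of_mem_spinProfiles hσ).const_mul a)
    ((integrable_of_mem_spinProfiles hτ).const_mul b), integral_const_mul, integral_const_mul,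
    hσ.2.2, hτ.2.2, ← add_mul, hab, one_mul]

theorem convexOn_integral_ient (μ : Measure X) [IsFiniteMeasure μ] (M : ℝ) :
    ConvexOn ℝ (spinProfiles μ M) fun σ => ∫ x, ient (σ x) ∂μ := by
  refine ⟨convex_spinProfiles μ M, fun σ hσ τ hτ a b ha hb hab => ?_⟩
  have integrable_ient {ρ : X → ℝ} (hρ : ρ ∈ spinProfiles μ M) :
      Integrable (fun x => ient (ρ x)) μ :=
    integrable_comp_of_mem_Icc continuous_ient hρ.1 hρ.2.1
  have hρ := convex_spinProfiles μ M hσ hτ ha hb hab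
  simp only [smul_eq_mul, ← integral_const_mul]
  rw [← integral_add ((integrable_ient hσ).const_mul a) ((integrable_ient hτ).const_mul b)]
  exact integral_mono (integrable_ient hρ) (((integrable_ient hσ).const_mul a).add
    ((integrable_ient hτ).const_mul b)) fun x =>
      strictConvexOn_ient.convexOn.2 (hσ.2.1 x) (hτ.2.1 x) ha hb hab

theorem IsBoundedKernel.integral_linearized_eq (hk : IsBoundedKernel k B)
    (hσ : σ ∈ spinProfiles μ M) {N : ℝ} (hτ : τ ∈ spinProfiles μ N) (β c : ℝ) :
    ∫ x, (ient (τ x) - (β * meanField μ k σ x + c) * τ x) ∂μ =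
      ∫ x, ient (τ x) ∂μ - β * interaction μ k τ σ - c * N := by
  have integrable_τ := integrable_of_mem_spinProfiles hτ
  have integrable_field :=
    hk.integrable_mul_meanField integrable_τ (integrable_of_mem_spinProfiles hσ)
  have integrable_ient : Integrable (fun x => ient (τ x)) μ :=
    integrable_comp_of_mem_Icc continuous_ient hτ.1 hτ.2.1
  calc ∫ x, (ient (τ x) - (β * meanField μ k σ x + c) * τ x) ∂μ
    _ = ∫ x, (ient (τ x) - β * (τ x * meanField μ k σ x) - c * τ x) ∂μ := by
      refine integral_congr_ae (.of_forall fun x => ?_)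
      ring
    _ = ∫ x, ient (τ x) ∂μ - β * interaction μ k τ σ - c * N := by
      have integrable_sub : Integrable
          (fun x => ient (τ x) - β * (τ x * meanField μ k σ x)) μ :=
        integrable_ient.sub (integrable_field.const_mul β)
      rw [integral_sub integrable_sub (integrable_τ.const_mul c),
        integral_sub integrable_ient (integrable_field.const_mul β),
        integral_const_mul, integral_const_mul, hτ.2.2, interaction_eq_integral_mul_meanField]

theorem IsBoundedKernel.isMinOn_linearized (hk : IsBoundedKernel k B)
    (hk_symm : ∀ x y, k x y = k y x) (hβ : 0 < β) (hσ : σ ∈ spinProfiles μ M)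
    (hmin : IsMinOn (freeEnergy μ k β) (spinProfiles μ M) σ) (c : ℝ) :
    IsMinOn (fun τ => ∫ x, (ient (τ x) - (β * meanField μ k σ x + c) * τ x) ∂μ)
      (spinProfiles μ M) σ := by
  refine isMinOn_iff.2 fun τ hτ => ?_
  have integrable_σ := integrable_of_mem_spinProfiles hσ
  have integrable_τ := integrable_of_mem_spinProfiles hτ
  have entropy_convex : ConvexOn ℝ (spinProfiles μ M) fun σ => (1 / β) * ∫ x, ient (σ x) ∂μ :=
    (convexOn_integral_ient μ M).smul (by positivity)
  have interaction_deriv :=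
    (hk.hasDerivAt_interaction_lineMap hk_symm integrable_σ integrable_τ).const_mul (-(1 / 2))
  have first_order := sub_add_deriv_nonneg_of_isMinOn_add
    (g := fun σ => -(1 / 2) * interaction μ k σ σ) entropy_convex hσ hτ interaction_deriv <| by
      convert hmin using 1
      ext ρ
      simp only [freeEnergy, Pi.add_apply]
      ring
  rw [hk.interaction_sub_left integrable_τ integrable_σ integrable_σ] at first_order
  rw [hk.integral_linearized_eq hσ hσ, hk.integral_linearized_eq hσ hτ]
  field_simp at first_order
  linarith

theorem IsBoundedKernel.exists_ae_eq_tanh_of_isMinOn (hk : IsBoundedKernel k B)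
    (hk_symm : ∀ x y, k x y = k y x) (hβ : 0 < β) (hm : m ∈ Ioo (-1) 1)
    (hσ : σ ∈ spinProfiles μ (m * μ.real univ))
    (hmin : IsMinOn (freeEnergy μ k β) (spinProfiles μ (m * μ.real univ)) σ) :
    ∃ c, σ =ᵐ[μ] fun x => tanh (β * (meanField μ k σ x + c)) := by
  have integrable_σ := integrable_of_mem_spinProfiles hσ
  have field_measurable : Measurable fun x => β * meanField μ k σ x :=
    (hk.measurable_meanField hσ.1).const_mul β
  have field_bounded (x : X) : |β * meanField μ k σ x| ≤ β * (B * ∫ y, |σ y| ∂μ) := by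
    rw [abs_mul, abs_of_pos hβ]
    exact mul_le_mul_of_nonneg_left (hk.abs_meanField_le integrable_σ x) hβ.le
  obtain ⟨c, hc⟩ := exists_integral_comp_add_eq (μ := μ) (contDiff_tanh (n := 0)).continuous
    monotone_tanh (fun t => (abs_tanh_lt_one t).le) field_measurable field_bounded
    (artanh m)
  rw [tanh_artanh hm] at hc
  have tanh_mem : (fun x => tanh (β * meanField μ k σ x + c)) ∈ spinProfiles μ (m * μ.real univ) :=
    ⟨(contDiff_tanh (n := 0)).continuous.measurable.comp (field_measurable.add_const c),
      fun x => Ioo_subset_Icc_self (tanh_mem_Ioo _), hc⟩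
  have field_integrable : Integrable (fun x => β * meanField μ k σ x) μ :=
    .of_bound field_measurable.aestronglyMeasurable _ (.of_forall field_bounded)
  refine ⟨c / β, ?_⟩
  simp only [mul_add, mul_div_cancel₀ c hβ.ne']
  exact ae_eq_tanh_of_integral_le (field_measurable.add_const c)
    (field_integrable.add (integrable_const c)) hσ.1 hσ.2.1
    (hk.isMinOn_linearized hk_symm hβ hσ hmin c tanh_mem)

end MeanField

section Convolution

variable {E F F' G : Type*} [NormedAddCommGroup E] [MeasurableSpace E] [BorelSpace E]
  {μ : Measure E} [NormedAddCommGroup F] [NormedAddCommGroup F'] [NormedAddCommGroup G]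
  {f : E → F} {g : E → F'} {M : ℝ}

theorem tendsto_integral_norm_translate_sub [μ.IsAddLeftInvariant] [IsLocallyFiniteMeasure μ]
    [μ.InnerRegularCompactLTTop] (hg : Integrable g μ) :
    Tendsto (fun x => ∫ t, ‖g (x + t) - g t‖ ∂μ) (𝓝 0) (𝓝 0) := by
  have : Fact ((1 : ENNReal) ≠ ⊤) := ⟨ENNReal.one_ne_top⟩
  have hg1 : MemLp g 1 μ := memLp_one_iff_integrable.2 hg
  have orbit_continuous : Continuous fun x : E => DomAddAct.mk x +ᵥ hg1.toLp g :=
    DomAddAct.continuous_mk.vadd continuous_const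
  have norm_eq (x : E) :
      ‖(DomAddAct.mk x +ᵥ hg1.toLp g) - hg1.toLp g‖ = ∫ t, ‖g (x + t) - g t‖ ∂μ := by
    rw [DomAddAct.mk_vadd_toLp, ← MemLp.toLp_sub]
    exact L1.norm_of_fun_eq_integral_norm ((hg.comp_add_left x).sub hg)
  have norm_continuous : Continuous fun x : E => ∫ t, ‖g (x + t) - g t‖ ∂μ := by
    simp only [← norm_eq]
    exact (orbit_continuous.sub continuous_const).norm
  simpa only [zero_add, sub_self, norm_zero, integral_zero] using norm_continuous.tendsto 0

variable [NormedSpace ℝ E] [FiniteDimensional ℝ E] [μ.IsAddHaarMeasure]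
  [NormedSpace ℝ F] [NormedSpace ℝ F'] [NormedSpace ℝ G] (L : F →L[ℝ] F' →L[ℝ] G)

theorem norm_convolution_le_of_norm_le (hf : ∀ x, ‖f x‖ ≤ M) (hg : Integrable g μ) (x : E) :
    ‖(f ⋆[L, μ] g) x‖ ≤ ‖L‖ * M * ∫ t, ‖g t‖ ∂μ := by
  rw [← integral_sub_left_eq_self (fun t => ‖g t‖) μ x, ← integral_const_mul]
  refine norm_integral_le_of_norm_le ((hg.comp_sub_left x).norm.const_mul _)
    (.of_forall fun t => (L.le_opNorm₂ _ _).trans ?_)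
  gcongr
  exact hf t

theorem continuous_convolution_of_norm_le (hf : AEStronglyMeasurable f μ)
    (hfM : ∀ x, ‖f x‖ ≤ M) (hg : Integrable g μ) : Continuous (f ⋆[L, μ] g) := by
  have exists_convolution (x : E) : Integrable (fun t => L (f t) (g (x - t))) μ :=
    L.integrable_of_bilin_of_bdd_left M hf (.of_forall hfM) (hg.comp_sub_left x)
  refine continuous_iff_continuousAt.2 fun x₀ => tendsto_iff_norm_sub_tendsto_zero.2 ?_
  have increment_le (x : E) : ‖(f ⋆[L, μ] g) x - (f ⋆[L, μ] g) x₀‖ ≤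
      ‖L‖ * M * ∫ t, ‖g (x - x₀ + t) - g t‖ ∂μ := by
    have increment_eq : (f ⋆[L, μ] g) x - (f ⋆[L, μ] g) x₀ =
        (f ⋆[L, μ] fun t => g (x - x₀ + t) - g t) x₀ := by
      simp only [convolution_def, map_sub, sub_add_sub_cancel]
      rw [integral_sub (exists_convolution x) (exists_convolution x₀)]
    rw [increment_eq]
    exact norm_convolution_le_of_norm_le L hfM ((hg.comp_add_left _).sub hg) x₀
  have sub_tendsto : Tendsto (fun x => x - x₀) (𝓝 x₀) (𝓝 0) :=
    tendsto_sub_nhds_zero_iff.2 tendsto_id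
  refine squeeze_zero (fun _ => norm_nonneg _) increment_le ?_
  simpa only [mul_zero, Function.comp_def] using
    ((tendsto_integral_norm_translate_sub hg).comp sub_tendsto).const_mul (‖L‖ * M)

variable [FiniteDimensional ℝ F'] {K : ℝ≥0}

theorem hasFDerivAt_convolution_right_of_lipschitzWith (hf : LocallyIntegrable f μ)
    (hg : LipschitzWith K g) (hcg : HasCompactSupport g) (x₀ : E) :
    HasFDerivAt (f ⋆[L, μ] g) ((f ⋆[L.precompR E, μ] fderiv ℝ g) x₀) x₀ := by
  set S : Set E := -tsupport g + Metric.closedBall x₀ 1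
  have isCompact_S : IsCompact S := hcg.isCompact.neg.add (isCompact_closedBall x₀ 1)
  have eq_zero_of_notMem {t : E} (ht : t ∉ S) {x : E} (hx : x ∈ Metric.ball x₀ 1) :
      g (x - t) = 0 := by
    refine image_eq_zero_of_notMem_tsupport fun h => ht ?_
    exact ⟨-(x - t), neg_mem_neg.2 h, x, Metric.ball_subset_closedBall hx, by simp⟩
  let _ : MeasurableSpace F' := borel F'
  have : BorelSpace F' := ⟨rfl⟩
  refine (hasFDerivAt_integral_of_dominated_loc_of_lip
    (bound := S.indicator fun t => ‖L‖ * ‖f t‖ * K) (Metric.ball_mem_nhds x₀ one_pos)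
    (.of_forall fun x => hf.aestronglyMeasurable.convolution_integrand_snd L
      hg.continuous.aestronglyMeasurable x)
    (hcg.convolutionExists_right L hf hg.continuous x₀)
    (hf.aestronglyMeasurable.convolution_integrand_snd (L.precompR E)
      (measurable_fderiv ℝ g).aestronglyMeasurable x₀) (.of_forall fun t => ?_) ?_ ?_).2
  · refine LipschitzOnWith.of_dist_le_mul fun x hx y hy => ?_
    rw [dist_eq_norm, dist_eq_norm, ← map_sub, coe_nnabs]
    by_cases ht : t ∈ S
    · rw [indicator_of_mem ht, abs_of_nonneg (by positivity), mul_assoc]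
      refine (L.le_opNorm₂ _ _).trans ?_
      gcongr
      simpa using hg.norm_sub_le (x - t) (y - t)
    · simp [eq_zero_of_notMem ht hx, eq_zero_of_notMem ht hy, ht]
  · rw [integrable_indicator_iff isCompact_S.measurableSet]
    exact ((hf.integrableOn_isCompact isCompact_S).norm.const_mul _).mul_const _
  · have rademacher : ∀ᵐ t ∂μ, DifferentiableAt ℝ g (x₀ - t) :=
      (quasiMeasurePreserving_sub_left μ x₀).ae hg.ae_differentiableAt
    filter_upwards [rademacher] with t ht
    exact (L (f t)).hasFDerivAt.comp x₀ (ht.hasFDerivAt.comp x₀ ((hasFDerivAt_id x₀).sub_const t))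

theorem integrable_fderiv_of_lipschitzWith (hg : LipschitzWith K g) (hcg : HasCompactSupport g) :
    Integrable (fderiv ℝ g) μ := by
  let _ : MeasurableSpace F' := borel F'
  have : BorelSpace F' := ⟨rfl⟩
  have integrable_bound : Integrable ((tsupport g).indicator fun _ => (K : ℝ)) μ :=
    (integrable_indicator_iff (isClosed_tsupport g).measurableSet).2
      (integrableOn_const hcg.isCompact.measure_lt_top.ne)
  refine integrable_bound.mono' (measurable_fderiv ℝ g).aestronglyMeasurable
    (.of_forall fun x => ?_)
  by_cases hx : x ∈ tsupport g
  · simpa only [indicator_of_mem hx] using norm_fderiv_le_of_lipschitz ℝ hg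
  · simp [indicator_of_notMem hx, fderiv_of_notMem_tsupport ℝ hx]

theorem contDiff_one_convolution_right_of_lipschitzWith (hf : AEStronglyMeasurable f μ)
    (hfM : ∀ x, ‖f x‖ ≤ M) (hg : LipschitzWith K g) (hcg : HasCompactSupport g) :
    ContDiff ℝ 1 (f ⋆[L, μ] g) := by
  have hasFDerivAt := hasFDerivAt_convolution_right_of_lipschitzWith L
    ((memLp_top_of_bound hf M (.of_forall hfM)).locallyIntegrable le_top) hg hcg
  refine contDiff_one_iff_fderiv.2 ⟨fun x => (hasFDerivAt x).differentiableAt, ?_⟩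
  rw [funext fun x => (hasFDerivAt x).fderiv]
  exact continuous_convolution_of_norm_le _ hf hfM (integrable_fderiv_of_lipschitzWith hg hcg)

theorem norm_fderiv_convolution_right_le_of_lipschitzWith (hf : AEStronglyMeasurable f μ)
    (hfM : ∀ x, ‖f x‖ ≤ M) (hg : LipschitzWith K g) (hcg : HasCompactSupport g) (x : E) :
    ‖fderiv ℝ (f ⋆[L, μ] g) x‖ ≤ ‖L‖ * M * ∫ t, ‖fderiv ℝ g t‖ ∂μ := by
  have hf_loc := (memLp_top_of_bound hf M (.of_forall hfM)).locallyIntegrable le_top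
  have hM : 0 ≤ M := (norm_nonneg _).trans (hfM x)
  rw [(hasFDerivAt_convolution_right_of_lipschitzWith L hf_loc hg hcg x).fderiv]
  refine (norm_convolution_le_of_norm_le _ hfM
    (integrable_fderiv_of_lipschitzWith hg hcg) x).trans ?_
  gcongr
  exact L.norm_precompR_le E

end Convolution

section Radial

variable {J : ℝ → ℝ}

theorem lipschitzWith_comp_norm {E : Type*} [SeminormedAddCommGroup E] {K : ℝ≥0}
    (hJ : LipschitzOnWith K J (Ici 0)) : LipschitzWith K fun w : E => J ‖w‖ := by
  simpa only [mul_one, lipschitzOnWith_univ, Function.comp_def] using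
    hJ.comp (lipschitzWith_one_norm.lipschitzOnWith (s := univ)) fun w _ => norm_nonneg w

theorem hasCompactSupport_comp_norm {E : Type*} [SeminormedAddCommGroup E] [ProperSpace E]
    {R : ℝ} (hJ : ∀ r, R ≤ r → J r = 0) : HasCompactSupport fun w : E => J ‖w‖ := by
  refine .intro (isCompact_closedBall 0 R) fun w hw => hJ _ ?_
  rw [mem_closedBall_zero_iff, not_le] at hw
  exact hw.le

namespace KacPotential

variable {d : ℕ}

theorem eq_zero_of_one_le (hJ : KacPotential d J) {r : ℝ} (hr : 1 ≤ r) : J r = 0 := by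
  have eqOn_Ioi : EqOn J 0 (Ioi 1) := hJ.support
  have eqOn_Ici := eqOn_Ioi.closure hJ.continuous continuous_zero
  rw [closure_Ioi] at eqOn_Ici
  exact eqOn_Ici hr

theorem exists_lipschitzOnWith (hJ : KacPotential d J) : ∃ K, LipschitzOnWith K J (Ici 0) := by
  obtain ⟨K, hK⟩ := hJ.smooth.exists_lipschitzOnWith (by simp) (convex_Icc 0 1) isCompact_Icc
  have eq_min (r : ℝ) : J r = J (min r 1) := by
    rcases le_total r 1 with hr | hr
    · rw [min_eq_left hr]
    · rw [min_eq_right hr, hJ.eq_zero_of_one_le hr, hJ.eq_zero_of_one_le le_rfl]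
  refine ⟨K, ?_⟩
  have comp_min := hK.comp ((LipschitzWith.id.min_const 1).lipschitzOnWith (s := Ici 0))
    fun r hr => ⟨le_min hr zero_le_one, min_le_right _ _⟩
  simpa only [mul_one, Function.comp_def, id, ← eq_min] using comp_min

end KacPotential

end Radial

section Torus

variable {d L : ℕ}

/-- The covering map `ℝ^d → (ℝ/Lℤ)^d`. -/
def toTorus (L : ℕ) (v : EuclideanSpace ℝ (Fin d)) : Torus d L :=
  fun i => ((v i : ℝ) : AddCircle (L : ℝ))

theorem measurable_liftTorus {φ : Torus d L → ℝ} (hφ : Measurable φ) : Measurable (liftTorus φ) :=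
  hφ.comp <| measurable_pi_lambda _ fun i => AddCircle.measurable_mk'.comp (by fun_prop)

/-- The half-open cube `∏ᵢ (aᵢ, aᵢ + L]`, a fundamental domain of the covering map. -/
def fundamentalCube (L : ℕ) (a : EuclideanSpace ℝ (Fin d)) : Set (EuclideanSpace ℝ (Fin d)) :=
  WithLp.ofLp ⁻¹' univ.pi fun i => Ioc (a i) (a i + L)

theorem mem_fundamentalCube {a w : EuclideanSpace ℝ (Fin d)} :
    w ∈ fundamentalCube L a ↔ ∀ i, w i ∈ Ioc (a i) (a i + L) := by
  simp only [fundamentalCube, mem_preimage, mem_univ_pi]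

theorem measurableSet_fundamentalCube (a : EuclideanSpace ℝ (Fin d)) :
    MeasurableSet (fundamentalCube L a) :=
  (MeasurableSet.univ_pi fun _ => measurableSet_Ioc).preimage (by fun_prop)

theorem measurePreserving_toTorus [Fact ((0 : ℝ) < L)] (a : EuclideanSpace ℝ (Fin d)) :
    MeasurePreserving (toTorus L) (volume.restrict (fundamentalCube L a)) := by
  have ofLp_cube := (PiLp.volume_preserving_ofLp (Fin d)).restrict_preimage
    (MeasurableSet.univ_pi fun i => measurableSet_Ioc (a := a i) (b := a i + L))
  have mk_cube := measurePreserving_pi _ _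
    fun i : Fin d => AddCircle.measurePreserving_mk (L : ℝ) (a i)
  rw [← Measure.restrict_pi_pi] at mk_cube
  exact mk_cube.comp ofLp_cube

theorem integral_torus_eq_setIntegral_liftTorus [Fact ((0 : ℝ) < L)] {φ : Torus d L → ℝ}
    (hφ : Measurable φ) (a : EuclideanSpace ℝ (Fin d)) :
    ∫ x, φ x = ∫ w in fundamentalCube L a, liftTorus φ w := by
  have preserving := measurePreserving_toTorus (L := L) a
  rw [← preserving.map_eq, integral_map preserving.measurable.aemeasurable
    hφ.aestronglyMeasurable]
  rfl

theorem volume_real_univ_torus [Fact ((0 : ℝ) < L)] :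
    (volume : Measure (Torus d L)).real univ = (L : ℝ) ^ d := by
  rw [Measure.real, volume_pi, Measure.pi_univ]
  simp [AddCircle.measure_univ]

theorem torusDist_comm (x y : Torus d L) : torusDist x y = torusDist y x := by
  simp only [torusDist, dist_comm]

theorem continuous_torusDist :
    Continuous fun p : Torus d L × Torus d L => torusDist p.1 p.2 := by
  unfold torusDist
  fun_prop

theorem torusDist_toTorus [Fact ((0 : ℝ) < L)] {v w : EuclideanSpace ℝ (Fin d)}
    (hvw : ∀ i, |v i - w i| ≤ L / 2) : torusDist (toTorus L v) (toTorus L w) = ‖v - w‖ := by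
  have hL : (0 : ℝ) < L := Fact.out
  have dist_eq (i : Fin d) : dist (toTorus L v i) (toTorus L w i) = ‖(v - w) i‖ := by
    rw [dist_eq_norm, toTorus, toTorus, ← AddCircle.coe_sub,
      (AddCircle.norm_coe_eq_abs_iff _ hL.ne').2 (by rw [abs_of_pos hL]; exact hvw i)]
    rfl
  simp only [torusDist, dist_eq, EuclideanSpace.norm_eq]

/-- The pair interaction on the torus with radial profile `J`. -/
noncomputable def torusKernel (J : ℝ → ℝ) (x y : Torus d L) : ℝ :=
  J (torusDist x y)

variable {J : ℝ → ℝ} {σ : Torus d L → ℝ} {K : ℝ≥0}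

theorem torusKernel_comm (x y : Torus d L) : torusKernel J x y = torusKernel J y x := by
  rw [torusKernel, torusDist_comm, torusKernel]

theorem continuous_uncurry_torusKernel (hJ : ContinuousOn J (Ici 0)) :
    Continuous (Function.uncurry (torusKernel J : Torus d L → Torus d L → ℝ)) :=
  hJ.comp_continuous continuous_torusDist fun _ => sqrt_nonneg _

theorem exists_isBoundedKernel_torusKernel [Fact ((0 : ℝ) < L)] (hJ : ContinuousOn J (Ici 0)) :
    ∃ B, IsBoundedKernel (torusKernel J : Torus d L → Torus d L → ℝ) B := by
  have kernel_continuous := continuous_uncurry_torusKernel (d := d) (L := L) hJ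
  obtain ⟨B, hB⟩ := isCompact_univ.exists_bound_of_continuousOn kernel_continuous.continuousOn
  exact ⟨B, kernel_continuous.measurable, fun x y => hB (x, y) (mem_univ _)⟩

theorem GPL_eq_freeEnergy [Fact ((0 : ℝ) < L)] (β : ℝ) :
    GPL d L β J = freeEnergy volume (torusKernel J) β :=
  rfl

theorem mem_spinProfiles_torus_iff [Fact ((0 : ℝ) < L)] {m : ℝ} :
    σ ∈ spinProfiles volume (m * (volume : Measure (Torus d L)).real univ) ↔
      Measurable σ ∧ (∀ x, σ x ∈ Icc (-1) 1) ∧ (L : ℝ) ^ (-(d : ℤ)) * ∫ x, σ x = m := by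
  have hL : (0 : ℝ) < L := Fact.out
  rw [volume_real_univ_torus, zpow_neg, zpow_natCast, inv_mul_eq_iff_eq_mul₀ (by positivity),
    mul_comm m]
  rfl

theorem liftTorus_meanField_torusKernel [Fact ((0 : ℝ) < L)] (hL : 2 ≤ L)
    (hJ : ContinuousOn J (Ici 0)) (hJ_zero : ∀ r, 1 ≤ r → J r = 0) (hσ : Measurable σ) :
    liftTorus (meanField volume (torusKernel J) σ) =
      liftTorus σ ⋆[ContinuousLinearMap.mul ℝ ℝ] fun w => J ‖w‖ := by
  ext v
  have hL' : (2 : ℝ) ≤ L := by exact_mod_cast hL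
  set cube := fundamentalCube L (WithLp.toLp 2 fun i => v i - L / 2)
  have integrand_measurable : Measurable fun y => torusKernel J (toTorus L v) y * σ y :=
    ((continuous_uncurry_torusKernel hJ).measurable.comp measurable_prodMk_left).mul hσ
  calc liftTorus (meanField volume (torusKernel J) σ) v
    _ = ∫ w in cube, torusKernel J (toTorus L v) (toTorus L w) * σ (toTorus L w) :=
      integral_torus_eq_setIntegral_liftTorus integrand_measurable _
    _ = ∫ w in cube, liftTorus σ w * J ‖v - w‖ := by
      refine setIntegral_congr_fun (measurableSet_fundamentalCube _) fun w hw => ?_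
      have dist_le (i : Fin d) : |v i - w i| ≤ L / 2 := by
        obtain ⟨lt_w, w_le⟩ := mem_fundamentalCube.1 hw i
        exact abs_le.2 ⟨by linarith, by linarith⟩
      simp only [torusKernel, torusDist_toTorus dist_le]
      exact mul_comm _ _
    _ = ∫ w, liftTorus σ w * J ‖v - w‖ := by
      refine setIntegral_eq_integral_of_forall_compl_eq_zero fun w hw => ?_
      rw [hJ_zero, mul_zero]
      contrapose! hw
      refine mem_fundamentalCube.2 fun i => ?_
      have coord_lt := (PiLp.norm_apply_le (v - w) i).trans_lt hw
      rw [PiLp.sub_apply, norm_eq_abs, abs_lt] at coord_lt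
      exact ⟨by linarith, by linarith⟩

theorem norm_liftTorus_le_one (hσI : ∀ x, σ x ∈ Icc (-1) 1) (v : EuclideanSpace ℝ (Fin d)) :
    ‖liftTorus σ v‖ ≤ 1 :=
  abs_le.2 (hσI _)

theorem contDiff_liftTorus_meanField_torusKernel [Fact ((0 : ℝ) < L)] (hL : 2 ≤ L)
    (hJ : LipschitzOnWith K J (Ici 0)) (hJ_zero : ∀ r, 1 ≤ r → J r = 0) (hσ : Measurable σ)
    (hσI : ∀ x, σ x ∈ Icc (-1) 1) :
    ContDiff ℝ 1 (liftTorus (meanField volume (torusKernel J) σ)) := by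
  rw [liftTorus_meanField_torusKernel hL hJ.continuousOn hJ_zero hσ]
  exact contDiff_one_convolution_right_of_lipschitzWith _
    (measurable_liftTorus hσ).aestronglyMeasurable (norm_liftTorus_le_one hσI)
    (lipschitzWith_comp_norm hJ) (hasCompactSupport_comp_norm hJ_zero)

theorem norm_fderiv_liftTorus_meanField_torusKernel_le [Fact ((0 : ℝ) < L)] (hL : 2 ≤ L)
    (hJ : LipschitzOnWith K J (Ici 0)) (hJ_zero : ∀ r, 1 ≤ r → J r = 0) (hσ : Measurable σ)
    (hσI : ∀ x, σ x ∈ Icc (-1) 1) (v : EuclideanSpace ℝ (Fin d)) :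
    ‖fderiv ℝ (liftTorus (meanField volume (torusKernel J) σ)) v‖ ≤
      ∫ w, ‖fderiv ℝ (fun w : EuclideanSpace ℝ (Fin d) => J ‖w‖) w‖ := by
  rw [liftTorus_meanField_torusKernel hL hJ.continuousOn hJ_zero hσ]
  simpa only [ContinuousLinearMap.opNorm_mul, one_mul] using
    norm_fderiv_convolution_right_le_of_lipschitzWith (ContinuousLinearMap.mul ℝ ℝ)
      (measurable_liftTorus hσ).aestronglyMeasurable (norm_liftTorus_le_one hσI)
      (lipschitzWith_comp_norm hJ) (hasCompactSupport_comp_norm hJ_zero) v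

end Torus

theorem minimizer_euler_lagrange_general (d : ℕ) (β : ℝ) (hβ : 0 < β) (J : ℝ → ℝ) (K : ℝ≥0)
    (hJ : LipschitzOnWith K J (Ici 0)) (hJ_zero : ∀ r, 1 ≤ r → J r = 0) :
    ∃ C : ℝ, 0 < C ∧
      ∀ (L : ℕ) [Fact ((0 : ℝ) < L)], 2 ≤ L →
      ∀ m : ℝ, m ∈ Ioo (-1 : ℝ) 1 →
      ∀ σs : Torus d L → ℝ, Measurable σs → (∀ x, σs x ∈ Icc (-1 : ℝ) 1) →
        ((L : ℝ) ^ (-(d : ℤ)) * ∫ r, σs r) = m →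
        (∀ σ : Torus d L → ℝ, Measurable σ → (∀ x, σ x ∈ Icc (-1 : ℝ) 1) →
          ((L : ℝ) ^ (-(d : ℤ)) * ∫ r, σ r) = m → GPL d L β J σs ≤ GPL d L β J σ) →
        (∀ᵐ x ∂(volume : Measure (Torus d L)), σs x ∈ Ioo (-1 : ℝ) 1) ∧
        (∃ lam : ℝ, ∀ᵐ x ∂(volume : Measure (Torus d L)),
            σs x = tanh (β * ((∫ y, J (torusDist x y) * σs y) + lam))) ∧
        (∃ σt : Torus d L → ℝ, σt =ᵐ[(volume : Measure (Torus d L))] σs ∧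
            ContDiff ℝ 1 (liftTorus σt) ∧ ∀ v, ‖fderiv ℝ (liftTorus σt) v‖ ≤ C) := by
  set C := ∫ w, ‖fderiv ℝ (fun w : EuclideanSpace ℝ (Fin d) => J ‖w‖) w‖
  have C_nonneg : 0 ≤ C := integral_nonneg fun w => norm_nonneg _
  refine ⟨|β| * C + 1, add_pos_of_nonneg_of_pos (mul_nonneg (abs_nonneg β) C_nonneg) one_pos,
    fun L _ hL m hm σ hσ hσI hσ_mean hmin => ?_⟩
  obtain ⟨B, hB⟩ := exists_isBoundedKernel_torusKernel (d := d) (L := L) hJ.continuousOn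
  have isMinOn : IsMinOn (freeEnergy volume (torusKernel J) β)
      (spinProfiles volume (m * volume.real univ)) σ := isMinOn_iff.2 fun τ hτ => by
    obtain ⟨hτ, hτI, hτ_mean⟩ := mem_spinProfiles_torus_iff.1 hτ
    simpa only [GPL_eq_freeEnergy] using hmin τ hτ hτI hτ_mean
  obtain ⟨c, hc⟩ := hB.exists_ae_eq_tanh_of_isMinOn torusKernel_comm hβ hm
    (mem_spinProfiles_torus_iff.2 ⟨hσ, hσI, hσ_mean⟩) isMinOn
  have field_contDiff := contDiff_liftTorus_meanField_torusKernel hL hJ hJ_zero hσ hσI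
  refine ⟨hc.mono fun x hx => hx ▸ tanh_mem_Ioo _, ⟨c, hc⟩, _, hc.symm,
    contDiff_tanh.comp (contDiff_const.mul (field_contDiff.add contDiff_const)), fun v => ?_⟩
  calc _ ≤ |β| * ‖fderiv ℝ (liftTorus (meanField volume (torusKernel J) σ)) v‖ :=
        norm_fderiv_tanh_mul_add_le (field_contDiff.differentiable one_ne_zero v) β c
    _ ≤ |β| * C := by
        gcongr
        exact norm_fderiv_liftTorus_meanField_torusKernel_le hL hJ hJ_zero hσ hσI v
    _ ≤ |β| * C + 1 := by linarith

/-- **Euler–Lagrange equation and regularity of constrained minimizers**: if `σ*` minimizes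
`F` among measurable `σ : T_L → [−1,1]` with mean `m ∈ (−1,1)`, then `−1 < σ* < 1` a.e.,
there is `λ ∈ ℝ` with `σ*(x) = tanh(β(J ∗ σ*(x) + λ))` a.e., and `σ*` has a continuously
differentiable version whose gradient is bounded by a constant `C` depending only on
`d`, `β` and `J`. -/
theorem minimizer_euler_lagrange (d : ℕ) (hd : 1 ≤ d) (β : ℝ) (hβ : 1 < β)
    (J : ℝ → ℝ) (hJ : KacPotential d J) :
    ∃ C : ℝ, 0 < C ∧
      ∀ (L : ℕ) [Fact ((0:ℝ) < L)], 2 ≤ L →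
      ∀ m : ℝ, m ∈ Set.Ioo (-1:ℝ) 1 →
      ∀ σs : Torus d L → ℝ, Measurable σs → (∀ x, σs x ∈ Set.Icc (-1:ℝ) 1) →
        ((L:ℝ) ^ (-(d:ℤ)) * ∫ r, σs r) = m →
        (∀ σ : Torus d L → ℝ, Measurable σ → (∀ x, σ x ∈ Set.Icc (-1:ℝ) 1) →
          ((L:ℝ) ^ (-(d:ℤ)) * ∫ r, σ r) = m → GPL d L β J σs ≤ GPL d L β J σ) →
        (∀ᵐ x ∂(volume : Measure (Torus d L)), σs x ∈ Set.Ioo (-1:ℝ) 1) ∧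
        (∃ lam : ℝ, ∀ᵐ x ∂(volume : Measure (Torus d L)),
            σs x = Real.tanh (β * ((∫ y, J (torusDist x y) * σs y) + lam))) ∧
        (∃ σt : Torus d L → ℝ, σt =ᵐ[(volume : Measure (Torus d L))] σs ∧
            ContDiff ℝ 1 (liftTorus σt) ∧ ∀ v, ‖fderiv ℝ (liftTorus σt) v‖ ≤ C) := by
  obtain ⟨K, hK⟩ := hJ.exists_lipschitzOnWith
  exact minimizer_euler_lagrange_general d β (by linarith) J K hK fun _ => hJ.eq_zero_of_one_le
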